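/- arXiv:1111.1994 — 2 statements merged into one kernel-verified Lean document; each statement's English description precedes it below -/
import Mathlib

section
/- (Lemma 4.4, Composition of combing rectangles) Suppose given two combing rectangles over F sharing a middle row: the first with top foldable sequence S_0 → ⋯ → S_K (maps f_k), bottom row T_0 → ⋯ → T_K (maps g_k), and collapse maps π_k : S_k → T_k with collapsed subgraphs σ_k; the second with top foldable sequence T_0 → ⋯ → T_K (maps g_k), bottom row U_0 → ⋯ → U_K (maps h_k), and collapse maps ρ_k : T_k → U_k with collapsed subgraphs τ_k. Then each composition ρ_k ∘ π_k : S_k → U_k is a collapse map; the diagram with top row S_0 → ⋯ → S_K, bottom row U_0 → ⋯ → U_K, and vertical maps ρ_k ∘ π_k is a combing rectangle; and the collapsed subgraph of ρ_k ∘ π_k equals the union of σ_k with the set of edges of S_k whose image under π_k is an edge of τ_k. -/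
/-!
Edge by edge, a simplicial map `φ` either collapses an edge or carries it to an edge, so `ρ k ∘ π k`
collapses exactly the edges collapsed by `π k` together with those sent by `π k` to edges collapsed
by `ρ k`. An edge that survives in `U k` therefore survives in `T k`, and the injectivity conditions
on edges of `π k` and `ρ k` compose.

For the compatibility of the collapsed subgraphs with `f k`, an edge of `S k` falls under one of two
cases. If `π k` collapses it, the upper rectangle gives the claim. Otherwise its image is an edge of
`T k`, to which the lower rectangle applies; here commutativity of the upper rectangle shows that
`f k` does not collapse an edge whose image in `T (k+1)` is still an edge.
-/

/-- A free splitting of a group `F`: a simplicial tree with at least two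
vertices, together with an action of `F` by graph automorphisms which is
minimal and has trivial edge stabilizers. -/
structure FreeSplitting (F : Type) [Group F] where
  V : Type
  graph : SimpleGraph V
  nontriv : Nontrivial V
  tree : graph.IsTree
  smul : F → V → V
  one_smul : ∀ v, smul 1 v = v
  mul_smul : ∀ γ δ v, smul (γ * δ) v = smul γ (smul δ v)
  adj_smul : ∀ (γ : F) ⦃x y : V⦄, graph.Adj x y → graph.Adj (smul γ x) (smul γ y)
  minimal : ∀ A : Set V, A.Nonempty → (∀ γ, smul γ '' A = A) →
      (graph.induce A).Connected → A = Set.univ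
  edge_stab : ∀ (γ : F) (x y : V), graph.Adj x y →
      (smul γ x = x ∧ smul γ y = y) ∨ (smul γ x = y ∧ smul γ y = x) → γ = 1

namespace FreeSplitting

variable {F : Type} [Group F]

/-- A map of free splittings: an `F`-equivariant simplicial map. -/
def IsFSMap (S T : FreeSplitting F) (φ : S.V → T.V) : Prop :=
  (∀ (γ : F) (x : S.V), φ (S.smul γ x) = T.smul γ (φ x)) ∧
  ∀ ⦃x y : S.V⦄, S.graph.Adj x y → φ x = φ y ∨ T.graph.Adj (φ x) (φ y)

/-- A collapse map: a map such that for each edge of `T` at most one edge of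
`S` is mapped onto it. -/
def IsCollapseMap (S T : FreeSplitting F) (φ : S.V → T.V) : Prop :=
  IsFSMap S T φ ∧
  ∀ ⦃x y x' y' : S.V⦄, S.graph.Adj x y → S.graph.Adj x' y' →
    T.graph.Adj (φ x) (φ y) → s(φ x, φ y) = s(φ x', φ y') → s(x, y) = s(x', y')

/-- The collapsed subgraph of a map: the set of edges of `S` whose endpoints
have equal image. -/
def collapsedEdges (S T : FreeSplitting F) (φ : S.V → T.V) : Set (Sym2 S.V) :=
  {e | e ∈ S.graph.edgeSet ∧ (Sym2.map φ e).IsDiag}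

/-- A foldable map: a map which is injective on each edge, with at least 2
gates at every vertex and at least 3 gates at every vertex of degree ≥ 3. -/
def IsFoldable (S T : FreeSplitting F) (φ : S.V → T.V) : Prop :=
  IsFSMap S T φ ∧
  (∀ ⦃x y : S.V⦄, S.graph.Adj x y → φ x ≠ φ y) ∧
  (∀ v : S.V, 2 ≤ (φ '' S.graph.neighborSet v).encard) ∧
  (∀ v : S.V, 3 ≤ (S.graph.neighborSet v).encard →
    3 ≤ (φ '' S.graph.neighborSet v).encard)

/-- A foldable sequence: a sequence of maps of free splittings such that each
composition `S i → S K` is a foldable map. -/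
def IsFoldableSeq (K : ℕ) (S : ℕ → FreeSplitting F)
    (f : ∀ k : ℕ, (S k).V → (S (k+1)).V) : Prop :=
  (∀ k, k < K → IsFSMap (S k) (S (k+1)) (f k)) ∧
  ∀ c : ∀ i : ℕ, (S i).V → (S K).V,
    (∀ x, c K x = x) →
    (∀ i, i < K → ∀ x, c i x = c (i+1) (f i x)) →
    ∀ i, i < K → IsFoldable (S i) (S K) (c i)

/-- A combing rectangle: a foldable top row `S`, a bottom row `T`, and collapse
maps `π k : S k → T k` commuting with the horizontal maps, such that the
collapsed subgraph of `π k` is the preimage under `f k` of the collapsed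
subgraph of `π (k+1)`. -/
def IsCombingRectangle (K : ℕ) (S : ℕ → FreeSplitting F)
    (f : ∀ k : ℕ, (S k).V → (S (k+1)).V)
    (T : ℕ → FreeSplitting F)
    (g : ∀ k : ℕ, (T k).V → (T (k+1)).V)
    (π : ∀ k : ℕ, (S k).V → (T k).V) : Prop :=
  IsFoldableSeq K S f ∧
  (∀ k, k < K → IsFSMap (T k) (T (k+1)) (g k)) ∧
  (∀ k, k ≤ K → IsCollapseMap (S k) (T k) (π k)) ∧
  (∀ k, k < K → ∀ x : (S k).V, g k (π k x) = π (k+1) (f k x)) ∧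
  (∀ k, k < K → collapsedEdges (S k) (T k) (π k) =
    {e ∈ (S k).graph.edgeSet |
      Sym2.map (f k) e ∈ collapsedEdges (S (k+1)) (T (k+1)) (π (k+1))})

end FreeSplitting

namespace FreeSplitting

variable {F : Type} [Group F]

theorem mk_mem_collapsedEdges {S T : FreeSplitting F} {φ : S.V → T.V} {x y : S.V} :
    s(x, y) ∈ collapsedEdges S T φ ↔ S.graph.Adj x y ∧ φ x = φ y := by
  simp [collapsedEdges]

theorem IsCollapseMap.comp {S T U : FreeSplitting F} {φ : S.V → T.V} {ψ : T.V → U.V}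
    (hψ : IsCollapseMap T U ψ) (hφ : IsCollapseMap S T φ) : IsCollapseMap S U (ψ ∘ φ) := by
  obtain ⟨⟨hφe, hφa⟩, hφc⟩ := hφ
  obtain ⟨⟨hψe, hψa⟩, hψc⟩ := hψ
  refine ⟨⟨fun γ x => by simp [hφe, hψe], fun x y hxy => ?_⟩, ?_⟩
  · rcases hφa hxy with h | h
    · exact Or.inl (congrArg ψ h)
    · exact hψa h
  · intro x y x' y' hxy hxy' hU heq
    simp only [Function.comp_apply] at hU heq
    have hU' : U.graph.Adj (ψ (φ x')) (ψ (φ y')) := by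
      rw [← SimpleGraph.mem_edgeSet, ← heq]; exact hU
    have hT : T.graph.Adj (φ x) (φ y) :=
      (hφa hxy).resolve_left fun h => hU.ne (congrArg ψ h)
    have hT' : T.graph.Adj (φ x') (φ y') :=
      (hφa hxy').resolve_left fun h => hU'.ne (congrArg ψ h)
    exact hφc hxy hxy' hT (hψc hT hT' hU heq)

theorem collapsedEdges_comp {S T U : FreeSplitting F} {φ : S.V → T.V} {ψ : T.V → U.V}
    (hφ : IsFSMap S T φ) :
    collapsedEdges S U (ψ ∘ φ) = collapsedEdges S T φ ∪
      {e ∈ S.graph.edgeSet | Sym2.map φ e ∈ collapsedEdges T U ψ} := by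
  ext e
  induction e using Sym2.ind with
  | _ x y =>
    simp only [Set.mem_union, Set.mem_ofPred_eq, Sym2.map_mk, mk_mem_collapsedEdges,
      SimpleGraph.mem_edgeSet, Function.comp_apply]
    constructor
    · rintro ⟨hxy, h⟩
      rcases hφ.2 hxy with h' | h'
      · exact Or.inl ⟨hxy, h'⟩
      · exact Or.inr ⟨hxy, h', h⟩
    · rintro (⟨hxy, h⟩ | ⟨hxy, -, h⟩)
      · exact ⟨hxy, congrArg ψ h⟩
      · exact ⟨hxy, h⟩

/-- Preimages of collapsed subgraphs are compatible with stacking rectangles: if the collapsed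
subgraphs of `φ` and `ψ` are the preimages under `f` and `g` of those of `φ'` and `ψ'`, then that of
`ψ ∘ φ` is the preimage under `f` of that of `ψ' ∘ φ'`. Only the upper square has to commute. -/
theorem collapsedEdges_comp_eq_preimage {S T U S' T' U' : FreeSplitting F}
    {f : S.V → S'.V} {g : T.V → T'.V} {φ : S.V → T.V} {ψ : T.V → U.V}
    {φ' : S'.V → T'.V} {ψ' : T'.V → U'.V}
    (hf : IsFSMap S S' f) (hφ : IsFSMap S T φ) (hφ' : IsFSMap S' T' φ')
    (hcomm : ∀ x, g (φ x) = φ' (f x))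
    (hσ : collapsedEdges S T φ =
      {e ∈ S.graph.edgeSet | Sym2.map f e ∈ collapsedEdges S' T' φ'})
    (hτ : collapsedEdges T U ψ =
      {e ∈ T.graph.edgeSet | Sym2.map g e ∈ collapsedEdges T' U' ψ'}) :
    collapsedEdges S U (ψ ∘ φ) =
      {e ∈ S.graph.edgeSet | Sym2.map f e ∈ collapsedEdges S' U' (ψ' ∘ φ')} := by
  ext e
  induction e using Sym2.ind with
  | _ x y =>
    have hσ' := Set.ext_iff.1 hσ s(x, y)
    have hτ' := Set.ext_iff.1 hτ s(φ x, φ y)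
    simp only [Set.mem_ofPred_eq, Sym2.map_mk, mk_mem_collapsedEdges,
      SimpleGraph.mem_edgeSet, Function.comp_apply, hcomm] at hσ' hτ' ⊢
    constructor
    · rintro ⟨hxy, h⟩
      rcases hφ.2 hxy with hT | hT
      · obtain ⟨-, hS', hT'⟩ := hσ'.1 ⟨hxy, hT⟩
        exact ⟨hxy, hS', congrArg ψ' hT'⟩
      · obtain ⟨-, hT', hU'⟩ := hτ'.1 ⟨hT, h⟩
        exact ⟨hxy, (hf.2 hxy).resolve_left fun h => hT'.ne (congrArg φ' h), hU'⟩
    · rintro ⟨hxy, hS', hU'⟩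
      refine ⟨hxy, ?_⟩
      -- If `φ' ∘ f = g ∘ φ` carries the edge to an edge, then `φ` does not collapse it.
      rcases hφ'.2 hS' with hT' | hT'
      · exact congrArg ψ (hσ'.2 ⟨hxy, hS', hT'⟩).2
      · have hT : T.graph.Adj (φ x) (φ y) := (hφ.2 hxy).resolve_left fun h =>
          hT'.ne (by rw [← hcomm, ← hcomm, h])
        exact (hτ'.2 ⟨hT, hT', hU'⟩).2

end FreeSplitting

open FreeSplitting in
/-- Lemma 4.4 (Composition of combing rectangles): stacking two combing
rectangles and composing the vertical collapse maps yields a combing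
rectangle, whose collapsed subgraph is the union of the upper collapsed
subgraph with the preimage of the lower one. -/
theorem combing_rectangle_comp {F : Type} [Group F] (K : ℕ)
    (S T U : ℕ → FreeSplitting F)
    (f : ∀ k : ℕ, (S k).V → (S (k+1)).V)
    (g : ∀ k : ℕ, (T k).V → (T (k+1)).V)
    (h : ∀ k : ℕ, (U k).V → (U (k+1)).V)
    (π : ∀ k : ℕ, (S k).V → (T k).V)
    (ρ : ∀ k : ℕ, (T k).V → (U k).V)
    (h₁ : IsCombingRectangle K S f T g π)
    (h₂ : IsCombingRectangle K T g U h ρ) :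
    (∀ k, k ≤ K → IsCollapseMap (S k) (U k) (ρ k ∘ π k)) ∧
    IsCombingRectangle K S f U h (fun k => ρ k ∘ π k) ∧
    (∀ k, k ≤ K → collapsedEdges (S k) (U k) (ρ k ∘ π k) =
      collapsedEdges (S k) (T k) (π k) ∪
        {e ∈ (S k).graph.edgeSet |
          Sym2.map (π k) e ∈ collapsedEdges (T k) (U k) (ρ k)}) := by
  obtain ⟨hS, -, hπ, hcomm₁, hσ⟩ := h₁
  obtain ⟨-, hU, hρ, hcomm₂, hτ⟩ := h₂
  have hcol : ∀ k, k ≤ K → IsCollapseMap (S k) (U k) (ρ k ∘ π k) :=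
    fun k hk => (hρ k hk).comp (hπ k hk)
  refine ⟨hcol, ⟨hS, hU, hcol, fun k hk x => ?_, fun k hk => ?_⟩, fun k hk =>
    collapsedEdges_comp (hπ k hk).1⟩
  · simp [hcomm₂ k hk, hcomm₁ k hk]
  · exact collapsedEdges_comp_eq_preimage (hS.1 k hk) (hπ k hk.le).1 (hπ (k+1) hk).1
      (hcomm₁ k hk) (hσ k hk) (hτ k hk)
end

section
/- (Spacing of maximal chains of free splitting units; proved in Section 6.2) Let 0 ≤ I ≤ J ≤ K, let Υ = N(I,J), and let I ≤ i_0 < i_1 < ⋯ < i_Υ ≤ J be integers with ¬L(i_{u−1}, i_u) for u = 1,…,Υ. Then for all 0 ≤ u ≤ v ≤ Υ one has N(i_u, i_v) = v − u. -/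
/-!
The lower bound `v - u ≤ N(i_u, i_v)` is witnessed by the subchain `i_u < ⋯ < i_v`. For the upper
bound, take any chain `j_0 < ⋯ < j_m` in `[i_u, i_v]` and splice it into the given one in place of
`i_u, …, i_v`:
`i_0 < ⋯ < i_{u-1} < j_0 < ⋯ < j_m < i_{v+1} < ⋯ < i_Υ`.
At the two seams stability is used in contrapositive form: `[i_{u-1}, j_0]` contains
`[i_{u-1}, i_u]` and `[j_m, i_{v+1}]` contains `[i_v, i_{v+1}]`, so `L` fails on both. The result is
a chain of length `u + m + (Υ - v)` in `[I, J]` (`HasChain.splice`), and maximality of `Υ` gives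
`m ≤ v - u`.
-/

/-- `HasChain L I J Υ`: there are integers `I ≤ i₀ < i₁ < ⋯ < i_Υ ≤ J` with
`¬ L (i (u-1)) (i u)` for `u = 1, …, Υ`. -/
def HasChain (L : ℕ → ℕ → Prop) (I J Υ : ℕ) : Prop :=
  ∃ i : ℕ → ℕ, I ≤ i 0 ∧ i Υ ≤ J ∧
    (∀ u, u < Υ → i u < i (u + 1)) ∧
    (∀ u, u < Υ → ¬ L (i u) (i (u + 1)))

/-- The number of free splitting units between indices `i` and `j`: the
greatest `Υ` admitting a chain as above between `min i j` and `max i j`. -/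
noncomputable def numUnits (L : ℕ → ℕ → Prop) (i j : ℕ) : ℕ :=
  sSup {Υ : ℕ | HasChain L (min i j) (max i j) Υ}



theorem add_sub_le_of_strict_steps {i : ℕ → ℕ} {n : ℕ} (h : ∀ u, u < n → i u < i (u + 1))
    {a b : ℕ} (hab : a ≤ b) (hb : b ≤ n) : i a + (b - a) ≤ i b := by
  induction b, hab using Nat.le_induction with
  | base => simp
  | succ b hab ih =>
    have := ih (by omega)
    have := h b (by omega)
    omega

/-- Chains have bounded length, so the supremum defining `numUnits` is a genuine maximum and not
the junk value `0` of an unbounded set. -/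
theorem bddAbove_hasChain (L : ℕ → ℕ → Prop) (I J : ℕ) : BddAbove {Υ : ℕ | HasChain L I J Υ} := by
  refine ⟨J, ?_⟩
  rintro m ⟨j, -, h2, h3, -⟩
  have := add_sub_le_of_strict_steps h3 (Nat.zero_le m) le_rfl
  omega

theorem HasChain.le_numUnits {L : ℕ → ℕ → Prop} {I J m : ℕ} (hIJ : I ≤ J)
    (h : HasChain L I J m) : m ≤ numUnits L I J := by
  unfold numUnits
  rw [min_eq_left hIJ, max_eq_right hIJ]
  exact le_csSup (bddAbove_hasChain L I J) h

/-- In a chain of length `n` in `[I, J]`, the segment between positions `u` and `v` may be replaced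
by any chain of length `m` in `[i u, i v]`. -/
theorem HasChain.splice {K : ℕ} {L : ℕ → ℕ → Prop}
    (hstab : ∀ i j, i ≤ j → j ≤ K → L i j →
      ∀ i' j', i ≤ i' → i' ≤ j' → j' ≤ j → L i' j')
    {I J : ℕ} (hJ : J ≤ K) {i : ℕ → ℕ} {n : ℕ} (h0 : I ≤ i 0) (hend : i n ≤ J)
    (hmono : ∀ u, u < n → i u < i (u + 1)) (hnL : ∀ u, u < n → ¬ L (i u) (i (u + 1)))
    {u v m : ℕ} (huv : u ≤ v) (hv : v ≤ n) (hj : HasChain L (i u) (i v) m) :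
    HasChain L I J (u + m + (n - v)) := by
  obtain ⟨j, j0, jm, jmono, jL⟩ := hj
  have key : ∀ a b, a ≤ b → b ≤ n → i a + (b - a) ≤ i b := fun a b hab hb =>
    add_sub_le_of_strict_steps hmono hab hb
  have jkey := add_sub_le_of_strict_steps jmono (Nat.zero_le m) le_rfl
  obtain ⟨k, hk⟩ : ∃ k : ℕ → ℕ, ∀ t, k t =
      if t < u then i t else if t ≤ u + m then j (t - u) else i (t - (u + m) + v) :=
    ⟨_, fun _ => rfl⟩
  have step : ∀ t, t < u + m + (n - v) → k t < k (t + 1) ∧ ¬ L (k t) (k (t + 1)) := by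
    intro t ht
    rw [hk, hk]
    rcases lt_trichotomy (t + 1) u with h | h | h
    · rw [if_pos (by omega), if_pos h]
      exact ⟨hmono t (by omega), hnL t (by omega)⟩
    · -- Left seam: `t = u - 1`.
      subst h
      rw [if_pos (by omega), if_neg (by omega), if_pos (by omega), Nat.sub_self]
      have h1 := hmono t (by omega)
      refine ⟨by omega, fun hL => hnL t (by omega) ?_⟩
      have h2 := key v n hv le_rfl
      exact hstab _ _ (by omega) (by omega) hL _ _ le_rfl h1.le j0
    · rcases lt_trichotomy t (u + m) with h' | h' | h'
      · rw [if_neg (by omega), if_pos (by omega), if_neg (by omega), if_pos (by omega),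
          show t + 1 - u = t - u + 1 by omega]
        exact ⟨jmono _ (by omega), jL _ (by omega)⟩
      · -- Right seam: `t = u + m`.
        subst h'
        rw [if_neg (by omega), if_pos le_rfl, if_neg (by omega), if_neg (by omega),
          show u + m - u = m by omega, show u + m + 1 - (u + m) + v = v + 1 by omega]
        have h1 := hmono v (by omega)
        refine ⟨by omega, fun hL => hnL v (by omega) ?_⟩
        have h2 := key (v + 1) n (by omega) le_rfl
        exact hstab _ _ (by omega) (by omega) hL _ _ jm h1.le le_rfl
      · rw [if_neg (by omega), if_neg (by omega), if_neg (by omega), if_neg (by omega),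
          show t + 1 - (u + m) + v = t - (u + m) + v + 1 by omega]
        exact ⟨hmono _ (by omega), hnL _ (by omega)⟩
  refine ⟨k, ?_, ?_, fun t ht => (step t ht).1, fun t ht => (step t ht).2⟩
  · rw [hk]
    split_ifs with h h'
    · exact h0
    · have := key 0 u (by omega) (by omega)
      rw [Nat.zero_sub]
      omega
    · omega
  · rw [hk]
    rw [if_neg (by omega)]
    split_ifs with h
    · have := key v n hv le_rfl
      rw [show u + m + (n - v) - u = m by omega]
      omega
    · rw [show u + m + (n - v) - (u + m) + v = n by omega]
      exact hend

/-- Spacing of maximal chains: if `I ≤ i₀ < ⋯ < i_Υ ≤ J` is a chain realizing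
`Υ = N(I,J)`, then `N(i_u, i_v) = v − u` for all `0 ≤ u ≤ v ≤ Υ`. -/
theorem numUnits_chain_spacing (K : ℕ) (L : ℕ → ℕ → Prop)
    (hrefl : ∀ i, i ≤ K → L i i)
    (hstab : ∀ i j, i ≤ j → j ≤ K → L i j →
      ∀ i' j', i ≤ i' → i' ≤ j' → j' ≤ j → L i' j')
    (I J : ℕ) (hIJ : I ≤ J) (hJ : J ≤ K)
    (i : ℕ → ℕ) (h0 : I ≤ i 0) (hend : i (numUnits L I J) ≤ J)
    (hmono : ∀ u, u < numUnits L I J → i u < i (u + 1))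
    (hnL : ∀ u, u < numUnits L I J → ¬ L (i u) (i (u + 1)))
    (u v : ℕ) (huv : u ≤ v) (hv : v ≤ numUnits L I J) :
    numUnits L (i u) (i v) = v - u := by
  have hle : i u ≤ i v := by
    have := add_sub_le_of_strict_steps hmono huv hv
    omega
  apply le_antisymm
  · have hbound : ∀ m, HasChain L (i u) (i v) m → m ≤ v - u := fun m hm => by
      have := (HasChain.splice hstab hJ h0 hend hmono hnL huv hv hm).le_numUnits hIJ
      omega
    rw [numUnits, min_eq_left hle, max_eq_right hle]
    exact csSup_le' hbound
  · refine HasChain.le_numUnits hle ⟨fun t => i (u + t), le_rfl, ?_,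
      fun t ht => hmono (u + t) (by omega), fun t ht => hnL (u + t) (by omega)⟩
    simp only [Nat.add_sub_cancel' huv, le_refl]
end
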